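/- arXiv:1812.06347 — 2 statements merged into one kernel-verified Lean document; each statement's English description precedes it below -/
import Mathlib

section
/- Define f : ℕ → ℕ by f(1) = 1 and f(n) = C(n, ⌊n/2⌋)·(f(⌊n/2⌋) + f(⌈n/2⌉)) for n > 1. Then for all n ≥ 1, 0.195 · 4^n · n^{−(lg n)/4} · n^{5/4 − (lg π)/2} ≤ f(n) ≤ (1/4) · 4^n · n^{−(lg n)/4} · n^{lg 5 − 3/4 − (lg π)/2}, where lg = log₂. -/
def f : ℕ → ℕ
  | 0 => 1
  | 1 => 1
  | n + 2 => Nat.choose (n + 2) ((n + 2) / 2) * (f ((n + 2) / 2) + f ((n + 2 + 1) / 2))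
decreasing_by all_goals omega

open Filter Topology in
lemma wallis_lower (m : ℕ) (hm : 1 ≤ m) :
    Real.Wallis.W m * (((128*(m:ℝ)^2+16*m+1)/(4*(32*(m:ℝ)^2+8*m+1)))^2 * ((2*m+1)/m)) ≤ Real.pi := by
  obtain ⟨k, rfl⟩ : ∃ k, m = k + 1 := ⟨m - 1, by omega⟩
  set z : ℕ → ℝ := fun m => Real.Wallis.W m *
    (((128*(m:ℝ)^2+16*m+1)/(4*(32*(m:ℝ)^2+8*m+1)))^2 * ((2*m+1)/m)) with hz
  have hmono : Monotone (fun k => z (k+1)) := by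
    apply monotone_nat_of_le_succ
    intro k
    simp only [hz]
    rw [Real.Wallis.W_succ (k+1), mul_assoc]
    apply mul_le_mul_of_nonneg_left _ (Real.Wallis.W_pos _).le
    push_cast
    have hk : (0:ℝ) ≤ k := Nat.cast_nonneg k
    generalize (k:ℝ) = x at hk
    rw [← sub_nonneg]
    have : (2 * (x + 1) + 2) / (2 * (x + 1) + 1) * ((2 * (x + 1) + 2) / (2 * (x + 1) + 3)) *
          (((128 * (x + 1 + 1) ^ 2 + 16 * (x + 1 + 1) + 1) / (4 * (32 * (x + 1 + 1) ^ 2 + 8 * (x + 1 + 1) + 1))) ^ 2 *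
            ((2 * (x + 1 + 1) + 1) / (x + 1 + 1))) -
        ((128 * (x + 1) ^ 2 + 16 * (x + 1) + 1) / (4 * (32 * (x + 1) ^ 2 + 8 * (x + 1) + 1))) ^ 2 *
          ((2 * (x + 1) + 1) / (x + 1))
      = (4*(x+1)*(x+2)*(128 * (x + 2) ^ 2 + 16 * (x + 2) + 1)^2*(32 * (x + 1) ^ 2 + 8 * (x + 1) + 1)^2
          - (2*(x+1)+1)^2*(128 * (x + 1) ^ 2 + 16 * (x + 1) + 1)^2*(32 * (x + 2) ^ 2 + 8 * (x + 2) + 1)^2) /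
        (16*(2*(x+1)+1)*(x+1)*(32 * (x + 1) ^ 2 + 8 * (x + 1) + 1)^2*(32 * (x + 2) ^ 2 + 8 * (x + 2) + 1)^2) := by
      have h1 : (32 * (x + 1) ^ 2 + 8 * (x + 1) + 1) ≠ 0 := by positivity
      have h2 : (32 * (x + 2) ^ 2 + 8 * (x + 2) + 1) ≠ 0 := by positivity
      have e : x + 1 + 1 = x + 2 := by ring
      have e3 : 2*(x+1)+3 = 2*(x+2)+1 := by ring
      have e2 : 2*(x+1)+2 = 2*(x+2) := by ring
      have h3 : 2*(x+2)+1 ≠ 0 := by positivity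
      have h4 : 2*(x+1)+1 ≠ 0 := by positivity
      have h5 : x+2 ≠ 0 := by positivity
      have h6 : x+1 ≠ 0 := by positivity
      rw [e, e3, e2]
      generalize (32 * (x + 1) ^ 2 + 8 * (x + 1) + 1) = A at *
      generalize (32 * (x + 2) ^ 2 + 8 * (x + 2) + 1) = B at *
      generalize 2*(x+2)+1 = C at *
      generalize 2*(x+1)+1 = D at *
      field_simp
      ring
    rw [this]
    apply div_nonneg _ (by positivity)
    ring_nf
    positivity
  have hT : Tendsto (fun k => z (k+1)) atTop (𝓝 Real.pi) := by
    rw [tendsto_add_atTop_iff_nat 1 (f := z)]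
    have i : Tendsto (fun m : ℕ => ((m:ℝ))⁻¹) atTop (𝓝 0) := tendsto_inv_atTop_nhds_zero_nat
    have h2 : Tendsto (fun m : ℕ => ((128+16*(m:ℝ)⁻¹+(m:ℝ)⁻¹^2)/(4*(32+8*(m:ℝ)⁻¹+(m:ℝ)⁻¹^2)))^2*(2+(m:ℝ)⁻¹))
        atTop (𝓝 (((128+16*0+0^2)/(4*(32+8*0+0^2)))^2*(2+0))) := by
      apply Tendsto.mul
      · apply Tendsto.pow
        apply Tendsto.div
        · exact ((i.const_mul 16).const_add 128).add (i.pow 2)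
        · exact (((i.const_mul 8).const_add 32).add (i.pow 2)).const_mul 4
        · norm_num
      · exact i.const_add 2
    have h3 := Real.Wallis.tendsto_W_nhds_pi_div_two.mul h2
    have e : Real.pi / 2 * (((128+16*0+0^2)/(4*(32+8*0+0^2)))^2*(2+0)) = Real.pi := by ring
    rw [e] at h3
    refine h3.congr' ?_
    filter_upwards [eventually_ge_atTop 1] with m hm
    have : (0:ℝ) < m := by exact_mod_cast hm
    simp only [hz]
    congr 1
    have h1 : (128+16*(m:ℝ)⁻¹+(m:ℝ)⁻¹^2) = (128*(m:ℝ)^2+16*m+1)/(m:ℝ)^2 := by field_simp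
    have h2 : (4*(32+8*(m:ℝ)⁻¹+(m:ℝ)⁻¹^2)) = (4*(32*(m:ℝ)^2+8*m+1))/(m:ℝ)^2 := by field_simp
    have h3 : (2+(m:ℝ)⁻¹) = (2*m+1)/m := by field_simp
    rw [h1, h2, h3, div_div_div_cancel_right₀ (by positivity)]
  exact hmono.ge_of_tendsto hT k

lemma wallis_choose (m : ℕ) :
    (Nat.choose (2*m) m : ℝ)^2 * (Real.Wallis.W m * (2*m+1)) = (4^m)^2 := by
  have h := Nat.choose_mul_factorial_mul_factorial (show m ≤ 2*m by omega)
  rw [show 2*m-m = m by omega] at h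
  have h' : (Nat.choose (2*m) m : ℝ) * (m.factorial:ℝ) * m.factorial = ((2*m).factorial : ℝ) := by
    exact_mod_cast h
  rw [Real.Wallis.W_eq_factorial_ratio, ← h']
  have a : (m.factorial:ℝ) ≠ 0 := by positivity
  have b : (Nat.choose (2*m) m : ℝ) ≠ 0 := by
    have := Nat.choose_pos (show m ≤ 2*m by omega)
    positivity
  have c : (2*(m:ℝ)+1) ≠ 0 := by positivity
  rw [show (2:ℝ)^(4*m) = (4^m)^2 by rw [← pow_mul, show (4:ℝ) = 2^2 by norm_num, ← pow_mul]; congr 1; ring]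
  field_simp

lemma choose_upper (m : ℕ) (hm : 1 ≤ m) :
    (Nat.choose (2*m) m : ℝ) ≤ 4^m / √(Real.pi * m) := by
  have hm' : (0:ℝ) < m := by exact_mod_cast hm
  have h := wallis_choose m
  have h2 := Real.Wallis.le_W m
  have hpi := Real.pi_pos
  rw [le_div_iff₀ (by positivity)]
  refine (sq_le_sq₀ (by positivity) (by positivity)).mp ?_
  rw [mul_pow, Real.sq_sqrt (by positivity), ← h]
  apply mul_le_mul_of_nonneg_left _ (by positivity)
  calc Real.pi * m ≤ ((2*(m:ℝ)+1)/(2*m+2)*(Real.pi/2))*(2*m+1) := by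
        rw [← sub_nonneg]
        have : (2*(m:ℝ)+1)/(2*m+2)*(Real.pi/2)*(2*m+1) - Real.pi * m = Real.pi/(4*(m+1)) := by
          field_simp; ring
        rw [this]; positivity
    _ ≤ _ := mul_le_mul_of_nonneg_right h2 (by positivity)

lemma choose_lower (m : ℕ) (hm : 1 ≤ m) :
    ((128*(m:ℝ)^2+16*m+1)/(4*(32*(m:ℝ)^2+8*m+1))) * (4^m / √(Real.pi * m)) ≤ (Nat.choose (2*m) m : ℝ) := by
  have hm' : (0:ℝ) < m := by exact_mod_cast hm
  have h := wallis_choose m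
  have h2 := wallis_lower m hm
  have hpi := Real.pi_pos
  rw [← mul_div_assoc, div_le_iff₀ (by positivity)]
  refine (sq_le_sq₀ (by positivity) (by positivity)).mp ?_
  rw [mul_pow, mul_pow, Real.sq_sqrt (by positivity), ← h]
  generalize ((128*(m:ℝ)^2+16*m+1)/(4*(32*(m:ℝ)^2+8*m+1))) = r at *
  have : Real.Wallis.W m * (r^2*(2*m+1)) ≤ Real.pi * m := by
    rw [← mul_div_assoc, ← mul_div_assoc, div_le_iff₀ hm'] at h2; exact h2
  calc _ = (Nat.choose (2*m) m : ℝ)^2 * (Real.Wallis.W m * (r^2*(2*m+1))) := by ring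
    _ ≤ _ := mul_le_mul_of_nonneg_left this (by positivity)

noncomputable def T (c x : ℝ) : ℝ := c * Real.log x - (Real.log x)^2 / (4 * Real.log 2)
noncomputable def E (c x : ℝ) : ℝ := Real.exp (T c x)
noncomputable def cl : ℝ := (5 : ℝ)/4 - (Real.logb 2 Real.pi) / 2
noncomputable def cu : ℝ := Real.logb 2 5 - 3/4 - (Real.logb 2 Real.pi) / 2

lemma E_pos (c x : ℝ) : 0 < E c x := Real.exp_pos _

lemma E_eq (c x : ℝ) (hx : 0 < x) : x ^ (-(Real.logb 2 x) / 4) * x ^ c = E c x := by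
  have h2 : Real.log 2 ≠ 0 := (Real.log_pos (by norm_num)).ne'
  rw [Real.rpow_def_of_pos hx, Real.rpow_def_of_pos hx, ← Real.exp_add, E, T, Real.logb]
  congr 1
  field_simp
  ring

lemma inv_sqrt_exp (y : ℝ) (hy : 0 < y) : Real.exp (-(Real.log y)/2) = 1/√y := by
  rw [neg_div, Real.exp_neg, ← Real.log_sqrt hy.le, Real.exp_log (Real.sqrt_pos.mpr hy), one_div]

lemma E_double (c A x : ℝ) (hx : 0 < x) (hA : 0 < A)
    (hc : (c - 1/4) * Real.log 2 = Real.log A - Real.log Real.pi / 2) :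
    E c (2*x) = A / √(Real.pi * x) * E c x := by
  have h2 : Real.log 2 ≠ 0 := (Real.log_pos (by norm_num)).ne'
  have hpi := Real.pi_pos
  have : A / √(Real.pi * x) = Real.exp (Real.log A + -(Real.log (Real.pi * x))/2) := by
    rw [Real.exp_add, Real.exp_log hA, inv_sqrt_exp _ (by positivity)]; ring
  rw [this, E, E, ← Real.exp_add]
  congr 1
  rw [T, T, Real.log_mul (by norm_num) hx.ne', Real.log_mul hpi.ne' hx.ne']
  have : Real.log A = (c - 1/4) * Real.log 2 + Real.log Real.pi / 2 := by linarith
  rw [this]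
  field_simp
  ring

lemma E_double_l (x : ℝ) (hx : 0 < x) : E cl (2*x) = 2 / √(Real.pi * x) * E cl x := by
  have h2 : Real.log 2 ≠ 0 := (Real.log_pos (by norm_num)).ne'
  apply E_double _ _ _ hx (by norm_num)
  rw [cl, Real.logb]; field_simp; ring

lemma E_double_u (x : ℝ) (hx : 0 < x) : E cu (2*x) = (5/2) / √(Real.pi * x) * E cu x := by
  have h2 : Real.log 2 ≠ 0 := (Real.log_pos (by norm_num)).ne'
  apply E_double _ _ _ hx (by norm_num)
  rw [cu, Real.logb, Real.logb, Real.log_div (by norm_num) (by norm_num)]; field_simp; ring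

/-- E c y = E c x * exp(-(log y - log x) * s), with s the averaged slope. -/
lemma E_ratio (c x y : ℝ) : E c y = E c x *
    Real.exp (-((Real.log y - Real.log x) * ((Real.logb 2 x + Real.logb 2 y)/4 - c))) := by
  have h2 : Real.log 2 ≠ 0 := (Real.log_pos (by norm_num)).ne'
  rw [E, E, ← Real.exp_add, T, T, Real.logb, Real.logb]
  congr 1
  field_simp
  ring

lemma log2_lt : Real.log 2 < 0.7 := by have := Real.log_two_lt_d9; linarith
lemma log2_gt : 0.69 < Real.log 2 := by have := Real.log_two_gt_d9; linarith

lemma logb_two_ge (x q : ℝ) (a b : ℕ) (hb : 0 < b) (hx : 0 < x) (hq : q = a / b)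
    (h : 2 ^ a ≤ x ^ b) : q ≤ Real.logb 2 x := by
  have h1 : Real.logb 2 (2^a) ≤ Real.logb 2 (x^b) := Real.logb_le_logb_of_le (by norm_num) (by positivity) h
  rw [Real.logb_pow, Real.logb_pow, Real.logb_self_eq_one (by norm_num)] at h1
  have : (0:ℝ) < b := by exact_mod_cast hb
  rw [hq, div_le_iff₀ this]; linarith

lemma logb_two_le (x q : ℝ) (a b : ℕ) (hb : 0 < b) (hx : 0 < x) (hq : q = a / b)
    (h : x ^ b ≤ 2 ^ a) : Real.logb 2 x ≤ q := by
  have h1 : Real.logb 2 (x^b) ≤ Real.logb 2 (2^a) := Real.logb_le_logb_of_le (by norm_num) (by positivity) h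
  rw [Real.logb_pow, Real.logb_pow, Real.logb_self_eq_one (by norm_num)] at h1
  have : (0:ℝ) < b := by exact_mod_cast hb
  rw [hq, le_div_iff₀ this]; linarith

lemma cl_bounds : 0.4 ≤ cl ∧ cl ≤ 0.45 := by
  have h1 : Real.logb 2 Real.pi ≤ 1.7 := by
    apply logb_two_le _ _ 17 10 (by norm_num) Real.pi_pos (by norm_num)
    calc Real.pi^10 ≤ 3.15^10 := by
          apply pow_le_pow_left₀ Real.pi_pos.le; exact Real.pi_lt_d2.le
      _ ≤ _ := by norm_num
  have h2 : 1.6 ≤ Real.logb 2 Real.pi := by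
    apply logb_two_ge _ _ 8 5 (by norm_num) Real.pi_pos (by norm_num)
    calc (2:ℝ)^8 ≤ 3.14^5 := by norm_num
      _ ≤ _ := by
          apply pow_le_pow_left₀ (by norm_num); exact Real.pi_gt_d2.le
  rw [cl]; constructor <;> linarith

lemma cu_bounds : 0 ≤ cu ∧ cu ≤ 0.75 := by
  have hpi := Real.pi_pos
  have e : cu = (Real.logb 2 (25/Real.pi))/2 - 3/4 := by
    rw [Real.logb_div (by norm_num) hpi.ne', show (25:ℝ) = 5^2 by norm_num, Real.logb_pow, cu]
    push_cast; ring
  have h1 : Real.logb 2 (25/Real.pi) ≤ 3 := by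
    apply logb_two_le _ _ 3 1 (by norm_num) (by positivity) (by norm_num)
    rw [pow_one, div_le_iff₀ hpi]
    linarith [Real.pi_gt_d2]
  have h2 : 2 ≤ Real.logb 2 (25/Real.pi) := by
    apply logb_two_ge _ _ 2 1 (by norm_num) (by positivity) (by norm_num)
    rw [pow_one, le_div_iff₀ hpi]
    linarith [Real.pi_lt_d2]
  rw [e]; constructor <;> linarith

/-- tangent bound at 4 -/
lemma logb_tangent (x : ℝ) (hx : 0 < x) :
    Real.logb 2 x ≤ 2 + (x - 4) / (4 * Real.log 2) := by
  have l2 : 0 < Real.log 2 := Real.log_pos (by norm_num)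
  have h := Real.log_le_sub_one_of_pos (show 0 < x/4 by positivity)
  rw [Real.log_div hx.ne' (by norm_num), show (4:ℝ) = 2^2 by norm_num, Real.log_pow] at h
  rw [Real.logb, div_le_iff₀ l2]
  field_simp
  push_cast at h
  linarith

lemma logb_lin (x : ℝ) (hx : 0 < x) :
    Real.logb 2 x ≤ 2 + 0.357 * (x - 4) ∨ (4 ≤ x ∧ Real.logb 2 x ≤ 2 + 0.363 * (x - 4)) := by
  have h := logb_tangent x hx
  have l1 := log2_lt
  have l2 := log2_gt
  rcases le_total x 4 with h4 | h4
  · left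
    have : (x - 4) / (4 * Real.log 2) ≤ 0.357 * (x - 4) := by
      rw [div_le_iff₀ (by linarith)]; nlinarith
    linarith
  · right
    refine ⟨h4, ?_⟩
    have : (x - 4) / (4 * Real.log 2) ≤ 0.363 * (x - 4) := by
      rw [div_le_iff₀ (by linarith)]; nlinarith
    linarith

lemma upper_main (m : ℕ) (hm : 1 ≤ m) :
    (E cu m + 4 * E cu (m+1)) / √(Real.pi * (m+1)) ≤ 2 * E cu (2*m+1) := by
  have hx : (1:ℝ) ≤ m := by exact_mod_cast hm
  generalize (m:ℝ) = x at *
  have hpi := Real.pi_pos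
  have l2 : 0 < Real.log 2 := Real.log_pos (by norm_num)
  rw [show 2*x+1 = 2*(x+1/2) by ring, E_double_u _ (by linarith)]
  obtain ⟨c0, c1⟩ := cu_bounds
  have sr : √(Real.pi * (x+1)) = √(Real.pi*(x+1/2)) * Real.exp ((Real.log (x+1) - Real.log (x+1/2))/2) := by
    have : Real.log (x+1) - Real.log (x+1/2) = Real.log ((x+1)/(x+1/2)) := by
      rw [Real.log_div (by linarith) (by linarith)]
    rw [this, ← Real.log_sqrt (by positivity), Real.exp_log (by positivity), ← Real.sqrt_mul (by positivity)]
    congr 1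
    field_simp
  have hE := E_pos cu (x+1/2)
  have hs : 0 < √(Real.pi*(x+1/2)) := by positivity
  rw [div_le_iff₀ (by positivity), sr,
    E_ratio cu (x+1/2) x, E_ratio cu (x+1/2) (x+1)]
  have key : Real.exp (-((Real.log x - Real.log (x+1/2)) * ((Real.logb 2 (x+1/2) + Real.logb 2 x)/4 - cu)))
     + 4 * Real.exp (-((Real.log (x+1) - Real.log (x+1/2)) * ((Real.logb 2 (x+1/2) + Real.logb 2 (x+1))/4 - cu)))
     ≤ 5 * Real.exp ((Real.log (x+1) - Real.log (x+1/2))/2) := by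
    have d1 : Real.log (x+1/2) - Real.log x ≤ 1/(2*x) := by
      have h := Real.log_le_sub_one_of_pos (show 0 < (x+1/2)/x by positivity)
      rw [Real.log_div (by linarith) (by linarith)] at h
      refine h.trans (le_of_eq ?_); field_simp; ring
    have d1' : 0 ≤ Real.log (x+1/2) - Real.log x := by
      have := Real.log_le_log (show 0 < x by linarith) (show x ≤ x+1/2 by linarith); linarith
    have d2 : 1/(2*x+2) ≤ Real.log (x+1) - Real.log (x+1/2) := by
      have h := Real.log_le_sub_one_of_pos (show 0 < (x+1/2)/(x+1) by positivity)
      rw [Real.log_div (by linarith) (by linarith)] at h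
      have e : (x+1/2)/(x+1) - 1 = -(1/(2*x+2)) := by field_simp; ring
      rw [e] at h; linarith
    have d2' : 0 ≤ Real.log (x+1) - Real.log (x+1/2) := le_trans (by positivity) d2
    have m1 : Real.logb 2 x ≤ Real.logb 2 (x+1) :=
      Real.logb_le_logb_of_le (by norm_num) (by linarith) (by linarith)
    have q1 : 1 ≤ Real.logb 2 (x+1) := by
      apply logb_two_ge _ _ 1 1 (by norm_num) (by linarith) (by norm_num); linarith
    have q2 : 0 ≤ Real.logb 2 (x+1/2) := Real.logb_nonneg (by norm_num) (by linarith)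
    have ub : Real.logb 2 (x+1/2) ≤ x + 1/2 := by
      rcases logb_lin (x+1/2) (by linarith) with h | ⟨h4, h⟩ <;> linarith
    have ub' : Real.logb 2 x ≤ Real.logb 2 (x+1/2) :=
      Real.logb_le_logb_of_le (by norm_num) (by linarith) (by linarith)
    set s1 := (Real.logb 2 (x+1/2) + Real.logb 2 x)/4 - cu with hs1
    set s2 := (Real.logb 2 (x+1/2) + Real.logb 2 (x+1))/4 - cu with hs2
    have s12 : s1 ≤ s2 := by rw [hs1, hs2]; linarith
    set D1 := Real.log (x+1/2) - Real.log x with hD1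
    set D2 := Real.log (x+1) - Real.log (x+1/2) with hD2
    have e1 : -((Real.log x - Real.log (x+1/2)) * s1) = D1 * s1 := by rw [hD1]; ring
    rw [e1]
    rcases le_total 0 s1 with h0 | h0
    · have sb : s1 ≤ (x+1/2)/2 := by rw [hs1]; linarith
      have b1 : D1 * s1 ≤ s1/(2*x) := by
        calc D1 * s1 ≤ 1/(2*x) * s1 := mul_le_mul_of_nonneg_right d1 h0
          _ = _ := by ring
      have b2 : s1/(2*x+2) ≤ D2 * s2 := by
        calc s1/(2*x+2) = 1/(2*x+2) * s1 := by ring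
          _ ≤ D2 * s2 := mul_le_mul d2 s12 h0 d2'
      have a1 : 0 < 1 - s1/(2*x) := by
        rw [sub_pos, div_lt_one (by linarith)]; linarith
      have p1 : Real.exp (D1*s1) ≤ 1/(1 - s1/(2*x)) := by
        have := Real.add_one_le_exp (-(D1*s1))
        rw [le_div_iff₀ a1]
        calc Real.exp (D1*s1) * (1 - s1/(2*x)) ≤ Real.exp (D1*s1) * Real.exp (-(D1*s1)) :=
              mul_le_mul_of_nonneg_left (by linarith) (Real.exp_pos _).le
          _ = 1 := by rw [← Real.exp_add]; simp
      have a2 : 0 < 1 + s1/(2*x+2) := by positivity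
      have p2 : Real.exp (-(D2*s2)) ≤ 1/(1 + s1/(2*x+2)) := by
        have := Real.add_one_le_exp (D2*s2)
        rw [le_div_iff₀ a2]
        calc Real.exp (-(D2*s2)) * (1 + s1/(2*x+2)) ≤ Real.exp (-(D2*s2)) * Real.exp (D2*s2) :=
              mul_le_mul_of_nonneg_left (by linarith) (Real.exp_pos _).le
          _ = 1 := by rw [← Real.exp_add]; simp
      have p3 : 1 ≤ Real.exp (D2/2) := Real.one_le_exp (by linarith)
      have fin : 1/(1 - s1/(2*x)) + 4*(1/(1 + s1/(2*x+2))) ≤ 5 := by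
        have n1 : 0 < 2*x - s1 := by linarith
        have n2 : 0 < 2*x+2+s1 := by linarith
        have e : 1/(1 - s1/(2*x)) + 4*(1/(1 + s1/(2*x+2))) = 5 - s1*(6*x-2-5*s1)/((2*x-s1)*(2*x+2+s1)) := by
          have : 1 - s1/(2*x) = (2*x-s1)/(2*x) := by field_simp
          rw [this]
          have : 1 + s1/(2*x+2) = (2*x+2+s1)/(2*x+2) := by field_simp
          rw [this]
          field_simp
          ring
        rw [e]
        have : 0 ≤ s1*(6*x-2-5*s1)/((2*x-s1)*(2*x+2+s1)) := by
          apply div_nonneg _ (by positivity)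
          apply mul_nonneg h0
          linarith
        linarith
      linarith
    · have p1 : Real.exp (D1*s1) ≤ Real.exp (D2/2) := by
        apply Real.exp_le_exp.mpr
        have := mul_nonpos_of_nonneg_of_nonpos d1' h0
        linarith
      have p2 : Real.exp (-(D2*s2)) ≤ Real.exp (D2/2) := by
        apply Real.exp_le_exp.mpr
        have : -(1/2) ≤ s2 := by rw [hs2]; linarith
        nlinarith
      linarith
  have := mul_le_mul_of_nonneg_left key hE.le
  refine le_trans (le_of_eq (by ring)) (this.trans (le_of_eq ?_))
  field_simp

noncomputable def r (x : ℝ) : ℝ := (128*x^2+16*x+1)/(4*(32*x^2+8*x+1))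
noncomputable def h (x : ℝ) : ℝ := 1 + 1/(4*x) + 1/(32*x^2)

lemma h_anti (x y : ℝ) (hx : 0 < x) (hxy : x ≤ y) : h y ≤ h x := by
  unfold h; gcongr

lemma h_r (x : ℝ) (hx : 0 < x) : h x * r x = h (2*x) := by
  unfold h r; field_simp; ring

lemma lower_main (m : ℕ) (hm : 2 ≤ m) :
    2 * E cl (2*m+1) ≤ r (m+1) / √(Real.pi * (m+1)) * (E cl m + 4 * E cl (m+1)) := by
  have hx : (2:ℝ) ≤ m := by exact_mod_cast hm
  generalize (m:ℝ) = x at *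
  have hpi := Real.pi_pos
  have l2 : 0 < Real.log 2 := Real.log_pos (by norm_num)
  rw [show 2*x+1 = 2*(x+1/2) by ring, E_double_l _ (by linarith)]
  obtain ⟨c0, c1⟩ := cl_bounds
  have hE := E_pos cl (x+1/2)
  have hs : 0 < √(Real.pi*(x+1/2)) := by positivity
  have hs' : 0 < √(Real.pi*(x+1)) := by positivity
  have hr : 1 - 1/(8*(x+1)) ≤ r (x+1) := by
    rw [r, le_div_iff₀ (by positivity), ← sub_nonneg]
    have : (128*(x+1)^2+16*(x+1)+1) - (1 - 1/(8*(x+1)))*(4*(32*(x+1)^2+8*(x+1)+1)) = 1 + 1/(2*(x+1)) := by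
      field_simp; ring
    rw [this]; positivity
  have hr0 : 0 < r (x+1) := by unfold r; positivity
  -- square-root comparison
  have hβ : (5*x+3)/(5*(x+1)) / √(Real.pi*(x+1/2)) ≤ r (x+1) / √(Real.pi * (x+1)) := by
    have : (5*x+3)/(5*(x+1)) * √(Real.pi*(x+1)) ≤ (1 - 1/(8*(x+1))) * √(Real.pi*(x+1/2)) := by
      have e : 1 - 1/(8*(x+1)) = (8*x+7)/(8*(x+1)) := by field_simp; ring
      rw [e]
      refine (sq_le_sq₀ (by positivity) (by positivity)).mp ?_
      rw [mul_pow, mul_pow, Real.sq_sqrt (by positivity), Real.sq_sqrt (by positivity), ← sub_nonneg]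
      have : ((8*x+7)/(8*(x+1)))^2*(Real.pi*(x+1/2)) - ((5*x+3)/(5*(x+1)))^2*(Real.pi*(x+1))
        = Real.pi * (25*(8*x+7)^2*(x+1/2) - 64*(5*x+3)^2*(x+1))/(1600*(x+1)^2) := by
        field_simp
        ring
      rw [this]
      apply div_nonneg _ (by positivity)
      apply mul_nonneg hpi.le
      nlinarith [mul_nonneg (by linarith : 0 ≤ x) (by linarith : 0 ≤ x - 2)]
    rw [div_le_div_iff₀ hs hs']
    refine this.trans (mul_le_mul_of_nonneg_right hr hs.le)
  rw [E_ratio cl (x+1/2) x, E_ratio cl (x+1/2) (x+1)]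
  have key : 4 ≤ (5*x+3)/(5*(x+1)) *
    (Real.exp (-((Real.log x - Real.log (x+1/2)) * ((Real.logb 2 (x+1/2) + Real.logb 2 x)/4 - cl)))
     + 4 * Real.exp (-((Real.log (x+1) - Real.log (x+1/2)) * ((Real.logb 2 (x+1/2) + Real.logb 2 (x+1))/4 - cl)))) := by
    have d1' : 0 ≤ Real.log (x+1/2) - Real.log x := by
      have := Real.log_le_log (show 0 < x by linarith) (show x ≤ x+1/2 by linarith); linarith
    have d2 : Real.log (x+1) - Real.log (x+1/2) ≤ 1/(2*x+1) := by
      have h := Real.log_le_sub_one_of_pos (show 0 < (x+1)/(x+1/2) by positivity)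
      rw [Real.log_div (by linarith) (by linarith)] at h
      have e : (x+1)/(x+1/2) - 1 = (1/(2*x+1)) := by field_simp; ring
      rw [e] at h; linarith
    have q1 : 1 ≤ Real.logb 2 x := by
      apply logb_two_ge _ _ 1 1 (by norm_num) (by linarith) (by norm_num); linarith
    have m1 : Real.logb 2 x ≤ Real.logb 2 (x+1/2) :=
      Real.logb_le_logb_of_le (by norm_num) (by linarith) (by linarith)
    have m2 : Real.logb 2 (x+1/2) ≤ Real.logb 2 (x+1) :=
      Real.logb_le_logb_of_le (by norm_num) (by linarith) (by linarith)
    have p1 := Real.add_one_le_exp (-((Real.log x - Real.log (x+1/2)) * ((Real.logb 2 (x+1/2) + Real.logb 2 x)/4 - cl)))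
    have p2 := Real.add_one_le_exp (-((Real.log (x+1) - Real.log (x+1/2)) * ((Real.logb 2 (x+1/2) + Real.logb 2 (x+1))/4 - cl)))
    have p3 : 0 ≤ (Real.log (x+1/2) - Real.log x) * ((Real.logb 2 (x+1/2) + Real.logb 2 x)/4 - cl) :=
      mul_nonneg d1' (by linarith)
    have p4 : (Real.log (x+1) - Real.log (x+1/2)) * ((Real.logb 2 (x+1/2) + Real.logb 2 (x+1))/4 - cl)
       ≤ 1/(2*x+1) * (Real.logb 2 (x+1)/2 - 0.4) :=
      mul_le_mul d2 (by linarith) (by linarith) (by positivity)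
    have p5 : 4 * (1/(2*x+1) * (Real.logb 2 (x+1)/2 - 0.4)) + 8/(5*x+3) ≤ 1 := by
      have e : 4 * (1/(2*x+1) * (Real.logb 2 (x+1)/2 - 0.4)) + 8/(5*x+3)
        = ((2*Real.logb 2 (x+1) - 1.6)*(5*x+3) + 8*(2*x+1))/((2*x+1)*(5*x+3)) := by
        field_simp; ring
      rw [e, div_le_one (by positivity)]
      rcases logb_lin (x+1) (by linarith) with h | ⟨h4, h⟩ <;> nlinarith
    have p6 : 4 + 8/(5*x+3) ≤ Real.exp (-((Real.log x - Real.log (x+1/2)) * ((Real.logb 2 (x+1/2) + Real.logb 2 x)/4 - cl)))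
     + 4 * Real.exp (-((Real.log (x+1) - Real.log (x+1/2)) * ((Real.logb 2 (x+1/2) + Real.logb 2 (x+1))/4 - cl))) := by
      linarith
    calc (4:ℝ) = (5*x+3)/(5*(x+1)) * (4 + 8/(5*x+3)) := by field_simp; ring
      _ ≤ _ := mul_le_mul_of_nonneg_left p6 (by positivity)
  generalize Real.exp (-((Real.log x - Real.log (x+1/2)) * ((Real.logb 2 (x+1/2) + Real.logb 2 x)/4 - cl))) = p at *
  generalize Real.exp (-((Real.log (x+1) - Real.log (x+1/2)) * ((Real.logb 2 (x+1/2) + Real.logb 2 (x+1))/4 - cl))) = q at *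
  have hpq : 0 ≤ p + 4*q := by
    by_contra hneg
    push Not at hneg
    have : (5*x+3)/(5*(x+1)) * (p + 4*q) ≤ 0 := mul_nonpos_of_nonneg_of_nonpos (by positivity) hneg.le
    linarith
  calc 2 * (2 / √(Real.pi*(x+1/2)) * E cl (x+1/2)) = 4 * (E cl (x+1/2) / √(Real.pi*(x+1/2))) := by ring
    _ ≤ ((5*x+3)/(5*(x+1)) * (p+4*q)) * (E cl (x+1/2) / √(Real.pi*(x+1/2))) := by gcongr
    _ = ((5*x+3)/(5*(x+1)) / √(Real.pi*(x+1/2))) * (E cl (x+1/2) * (p+4*q)) := by ring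
    _ ≤ (r (x+1) / √(Real.pi * (x+1))) * (E cl (x+1/2) * (p+4*q)) := by gcongr
    _ = _ := by ring

lemma f_even (m : ℕ) (hm : 1 ≤ m) : f (2*m) = Nat.choose (2*m) m * (2 * f m) := by
  obtain ⟨k, rfl⟩ : ∃ k, m = k + 1 := ⟨m - 1, by omega⟩
  rw [show 2*(k+1) = 2*k+2 by ring, f, show (2*k+2)/2 = k+1 by omega, show (2*k+2+1)/2 = k+1 by omega]
  ring

lemma f_odd (m : ℕ) (hm : 1 ≤ m) : 2 * f (2*m+1) = Nat.choose (2*(m+1)) (m+1) * (f m + f (m+1)) := by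
  obtain ⟨k, rfl⟩ : ∃ k, m = k + 1 := ⟨m - 1, by omega⟩
  rw [show 2*(k+1)+1 = 2*k+1+2 by ring, f, show (2*k+1+2)/2 = k+1 by omega,
    show (2*k+1+2+1)/2 = k+1+1 by omega, show 2*(k+1+1) = (2*k+1+2)+1 by ring,
    Nat.choose_succ_succ (2*k+1+2) (k+1),
    Nat.choose_symm_of_eq_add (show 2*k+1+2 = (k+1)+1 + (k+1) by ring)]
  ring

lemma upper (n : ℕ) : 1 ≤ n → (f n : ℝ) ≤ 1/4 * 4^n * E cu n := by
  induction n using Nat.strong_induction_on with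
  | _ n ih =>
  intro hn
  rcases Nat.even_or_odd' n with ⟨m, rfl | rfl⟩
  · have hm : 1 ≤ m := by omega
    have hm' : (0:ℝ) < m := by exact_mod_cast hm
    have hc := choose_upper m hm
    have hi := ih m (by omega) hm
    have hpi := Real.pi_pos
    have hE := E_pos cu m
    have hfe : (f (2*m) : ℝ) = Nat.choose (2*m) m * (2 * f m) := by exact_mod_cast f_even m hm
    rw [hfe]
    push_cast
    rw [E_double_u _ hm']
    calc (Nat.choose (2*m) m : ℝ) * (2 * f m) ≤ (4^m / √(Real.pi * m)) * (2 * (1/4 * 4^m * E cu m)) := by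
          gcongr
      _ = 2 * (1/4 * (4^m)^2 * E cu m / √(Real.pi * m)) := by ring
      _ ≤ 5/2 * (1/4 * (4^m)^2 * E cu m / √(Real.pi * m)) := by gcongr; norm_num
      _ = _ := by rw [pow_mul']; ring
  · rcases Nat.eq_zero_or_pos m with rfl | hm
    · have : f 1 = 1 := by rw [f]
      norm_num [this, E, T]
    have hm : 1 ≤ m := hm
    have hc := choose_upper (m+1) (by omega)
    have h1 := ih m (by omega) hm
    have h2 := ih (m+1) (by omega) (by omega)
    have hu := upper_main m hm
    have hfe : 2 * (f (2*m+1) : ℝ) = Nat.choose (2*(m+1)) (m+1) * (f m + f (m+1)) := by exact_mod_cast f_odd m hm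
    push_cast at *
    have : 2 * (f (2*m+1) : ℝ) ≤ 2 * (1/4 * 4^(2*m+1) * E cu (2*m+1)) := by
      rw [hfe]
      calc _ ≤ (4^(m+1) / √(Real.pi * (m+1))) * (1/4 * 4^m * E cu m + 1/4*4^(m+1) * E cu (m+1)) := by
            gcongr
        _ = (4^m)^2 * ((E cu m + 4 * E cu (m+1)) / √(Real.pi * (m+1))) := by ring
        _ ≤ (4^m)^2 * (2 * E cu (2*m+1)) := by gcongr
        _ = _ := by rw [pow_succ 4 (2*m), pow_mul']; ring
    linarith

lemma lower_three : 0.195 * 4^3 * h 3 * E cl 3 ≤ 15 := by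
  have hE : E cl 3 ≤ 1.1 := by
    rw [← E_eq cl 3 (by norm_num), ← Real.rpow_add (by norm_num)]
    have h1 : (1.5:ℝ) ≤ Real.logb 2 3 := by
      apply logb_two_ge _ _ 3 2 (by norm_num) (by norm_num) (by norm_num); norm_num
    obtain ⟨c0, c1⟩ := cl_bounds
    calc (3:ℝ)^(-(Real.logb 2 3)/4 + cl) ≤ 3^((1:ℝ)/12) :=
          Real.rpow_le_rpow_of_exponent_le (by norm_num) (by linarith)
      _ ≤ ((1.1:ℝ)^12)^((1:ℝ)/12) := Real.rpow_le_rpow (by norm_num) (by norm_num) (by norm_num)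
      _ = 1.1 := by
        rw [← Real.rpow_natCast, ← Real.rpow_mul (by norm_num)]; norm_num
  have : h 3 = 1 + 1/12 + 1/288 := by unfold h; norm_num
  rw [this]; linarith

lemma lower (n : ℕ) : 1 ≤ n → 0.195 * 4^n * h n * E cl n ≤ f n := by
  induction n using Nat.strong_induction_on with
  | _ n ih =>
  intro hn
  rcases Nat.even_or_odd' n with ⟨m, rfl | rfl⟩
  · have hm : 1 ≤ m := by omega
    have hm' : (0:ℝ) < m := by exact_mod_cast hm
    have hc : r m * (4^m / √(Real.pi * m)) ≤ (Nat.choose (2*m) m : ℝ) := choose_lower m hm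
    have hi := ih m (by omega) hm
    have hpi := Real.pi_pos
    have hE := E_pos cl m
    have hh : 0 < h m := by unfold h; positivity
    have hr : 0 < r m := by unfold r; positivity
    have hfe : (f (2*m) : ℝ) = Nat.choose (2*m) m * (2 * f m) := by exact_mod_cast f_even m hm
    rw [hfe]
    push_cast
    rw [E_double_l _ hm', ← h_r _ hm']
    calc _ = r m * (4^m / √(Real.pi * m)) * (2 * (0.195 * 4^m * h m * E cl m)) := by rw [pow_mul']; ring
      _ ≤ _ := by gcongr
  · rcases Nat.eq_zero_or_pos m with rfl | hm
    · have : f 1 = 1 := by rw [f]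
      norm_num [this, E, T, h]
    rcases Nat.lt_or_ge m 2 with h2 | hm2
    · obtain rfl : m = 1 := by omega
      have e1 : f 1 = 1 := by rw [f]
      have e2 : f 2 = 4 := by have := f_even 1 le_rfl; norm_num [e1] at this; exact this
      have e3 : f 3 = 15 := by
        have := f_odd 1 le_rfl
        rw [show Nat.choose (2*(1+1)) (1+1) = 6 by decide] at this
        norm_num [e1, e2] at this; omega
      have := lower_three
      rw [show 2*1+1 = 3 by norm_num, e3]
      push_cast
      exact this
    have hm' : (0:ℝ) < m := by exact_mod_cast hm
    have hc : r (m+1:ℕ) * (4^(m+1) / √(Real.pi * (m+1:ℕ))) ≤ (Nat.choose (2*(m+1)) (m+1) : ℝ) :=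
      choose_lower (m+1) (by omega)
    have h1 := ih m (by omega) hm
    have h2 := ih (m+1) (by omega) (by omega)
    have hu := lower_main m hm2
    have hfe : 2 * (f (2*m+1) : ℝ) = Nat.choose (2*(m+1)) (m+1) * (f m + f (m+1)) := by exact_mod_cast f_odd m hm
    push_cast at *
    have a1 : h (2*m+1) ≤ h (m:ℝ) := h_anti _ _ hm' (by linarith)
    have a2 : h (2*m+1) ≤ h (m+1:ℝ) := h_anti _ _ (by linarith) (by linarith)
    have hr : 0 < r (m+1) := by unfold r; positivity
    have hh : 0 < h (2*m+1) := by unfold h; positivity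
    have E1 := E_pos cl m
    have E2 := E_pos cl (m+1)
    have hpi := Real.pi_pos
    have : 2 * (0.195 * 4^(2*m+1) * h (2*m+1) * E cl (2*m+1)) ≤ 2 * (f (2*m+1) : ℝ) := by
      rw [hfe]
      calc 2 * (0.195 * 4^(2*m+1) * h (2*m+1) * E cl (2*m+1))
          = 0.195 * 4 * (4^m)^2 * h (2*m+1) * (2 * E cl (2*m+1)) := by rw [pow_succ, pow_mul']; ring
        _ ≤ 0.195 * 4 * (4^m)^2 * h (2*m+1) * (r (m+1) / √(Real.pi * (m+1)) * (E cl m + 4 * E cl (m+1))) := by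
            gcongr
        _ = r (m+1) * (4^(m+1) / √(Real.pi * (m+1))) *
            (0.195 * 4^m * h (2*m+1) * E cl m + 0.195*4^(m+1) * h (2*m+1) * E cl (m+1)) := by ring
        _ ≤ r (m+1) * (4^(m+1) / √(Real.pi * (m+1))) * (f m + f (m+1)) := by
            apply mul_le_mul_of_nonneg_left _ (by positivity)
            apply add_le_add
            · refine le_trans ?_ h1; gcongr
            · refine le_trans ?_ h2; gcongr
        _ ≤ _ := by gcongr
    linarith

theorem stmt_10 (n : ℕ) (hn : 1 ≤ n) :
    0.195 * 4 ^ (n : ℝ) * (n : ℝ) ^ (-(Real.logb 2 n) / 4) *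
        (n : ℝ) ^ ((5 : ℝ)/4 - (Real.logb 2 Real.pi) / 2) ≤ (f n : ℝ) ∧
    (f n : ℝ) ≤ (1/4) * 4 ^ (n : ℝ) * (n : ℝ) ^ (-(Real.logb 2 n) / 4) *
        (n : ℝ) ^ (Real.logb 2 5 - 3/4 - (Real.logb 2 Real.pi) / 2) := by
  have hn' : (0:ℝ) < n := by exact_mod_cast hn
  have e1 := E_eq cl n hn'
  have e2 := E_eq cu n hn'
  rw [cl] at e1
  rw [cu] at e2
  rw [mul_assoc _ ((n:ℝ)^_) _, mul_assoc _ ((n:ℝ)^_) _, e1, e2, Real.rpow_natCast]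
  refine ⟨le_trans ?_ (lower n hn), upper n hn⟩
  have hh : 1 ≤ h n := by
    unfold h
    have : 0 ≤ 1/(4*(n:ℝ)) + 1/(32*(n:ℝ)^2) := by positivity
    linarith
  have hE := E_pos cl n
  have : (0.195 * 4^n) * 1 * E cl n ≤ (0.195 * 4^n) * h n * E cl n := by gcongr
  rw [mul_one] at this
  exact this
end

section
/- Let ℓ(n,k) denote the minimum alphabetic length of a regular expression (over union, concatenation, Kleene star) specifying a subset of the permutation language P_n of cardinality at least k. Define f by f(1)=1 and f(n) = C(n,⌊n/2⌋)(f(⌊n/2⌋)+f(⌈n/2⌉)) for n>1. Then for all n ≥ 1 and 1 ≤ k ≤ n!, ℓ(n,k)/k ≥ ℓ(n,n!)/n! ≥ f(n)/n!. -/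
/-- Alphabetic length of a regular expression: the number of occurrences of
alphabet symbols. -/
def alen {α : Type*} : RegularExpression α → ℕ
  | RegularExpression.zero => 0
  | RegularExpression.epsilon => 0
  | RegularExpression.char _ => 1
  | RegularExpression.plus r s => alen r + alen s
  | RegularExpression.comp r s => alen r + alen s
  | RegularExpression.star r => alen r

/-- The permutation language `P n`: all words over an `n`-letter alphabet using
each letter exactly once. -/
def permLang (n : ℕ) : Language (Fin n) :=
  {w | w.Perm (List.finRange n)}

/-- `ell n k` is the minimum alphabetic length of a regular expression
specifying a subset of `P n` of cardinality at least `k`. -/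
noncomputable def ell (n k : ℕ) : ℕ :=
  sInf {m | ∃ r : RegularExpression (Fin n),
    (∀ w, w ∈ r.matches' → w ∈ permLang n) ∧ k ≤ Set.ncard {w | w ∈ r.matches'} ∧ alen r = m}

lemma f_bal_aux (n : ℕ) (hn : 2 ≤ n) :
    f n = Nat.choose n (n / 2) * (f (n / 2) + f ((n + 1) / 2)) := by
  obtain ⟨m, rfl⟩ := Nat.exists_eq_add_of_le' hn
  rw [f]

lemma f_bal (p q : ℕ) (hp : 1 ≤ p) (hq : 1 ≤ q) (h1 : p ≤ q + 1) (h2 : q ≤ p + 1) :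
    f (p + q) = Nat.choose (p + q) p * (f p + f q) := by
  rw [f_bal_aux _ (by omega)]
  rcases le_total p q with h | h
  · have e1 : (p + q) / 2 = p := by omega
    have e2 : (p + q + 1) / 2 = q := by omega
    rw [e1, e2]
  · have e1 : (p + q) / 2 = q := by omega
    have e2 : (p + q + 1) / 2 = p := by omega
    rw [e1, e2, Nat.choose_symm_add, add_comm (f q)]

lemma f_one : f 1 = 1 := by rw [f]

lemma f_pos (n : ℕ) : 1 ≤ f n := by
  induction n using Nat.strong_induction_on with
  | _ n ih =>
    rcases n with _ | _ | n
    · rw [f]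
    · rw [f]
    · rw [f]
      have := ih ((n + 2) / 2) (by omega)
      have h2 : 0 < Nat.choose (n + 2) ((n + 2) / 2) := Nat.choose_pos (by omega)
      exact Nat.mul_pos h2 (by omega)

lemma f_step (n : ℕ) (hn : 1 ≤ n) : 3 * f n ≤ f (n + 1) := by
  induction n using Nat.strong_induction_on with
  | _ n ih =>
    rcases Nat.even_or_odd' n with ⟨m, rfl | rfl⟩
    · have hm : 1 ≤ m := by omega
      have i1 := ih m (by omega) hm
      have e1 := f_bal m m hm hm (by omega) (by omega)
      have e2 := f_bal m (m + 1) hm (by omega) (by omega) (by omega)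
      rw [show 2 * m = m + m by ring, show m + m + 1 = m + (m + 1) by ring, e1, e2]
      have hc : (m + m + 1) * Nat.choose (m + m) m = Nat.choose (m + (m + 1)) m * (m + 1) := by
        have := Nat.add_one_mul_choose_eq (m + m) m
        rw [this]
        congr 1
        rw [add_assoc, ← Nat.choose_symm_add]
      have hc2 : 3 * Nat.choose (m + m) m ≤ 2 * Nat.choose (m + (m + 1)) m := by
        by_contra hcon
        push Not at hcon
        nlinarith
      nlinarith
    · rcases Nat.eq_zero_or_pos m with rfl | hm
      · have := f_bal 1 1 (by omega) (by omega) (by omega) (by omega)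
        simp [f_one] at this ⊢
        omega
      · have i1 := ih m (by omega) hm
        have e1 := f_bal m (m + 1) hm (by omega) (by omega) (by omega)
        have e2 := f_bal (m + 1) (m + 1) (by omega) (by omega) (by omega) (by omega)
        rw [show 2 * m + 1 = m + (m + 1) by ring,
          show m + (m + 1) + 1 = (m + 1) + (m + 1) by ring, e1, e2]
        have hc : Nat.choose (m + 1 + (m + 1)) (m + 1) = 2 * Nat.choose (m + (m + 1)) m := by
          rw [show m + 1 + (m + 1) = (m + (m + 1)) + 1 by ring, Nat.choose_succ_succ,
            ← Nat.choose_symm_add]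
          ring
        rw [hc]
        nlinarith [Nat.zero_le (Nat.choose (m + (m + 1)) m)]

lemma f_lt (m n : ℕ) (hm : 1 ≤ m) (h : m + 1 ≤ n) : 3 * f m ≤ f n := by
  induction n, h using Nat.le_induction with
  | base => exact f_step m hm
  | succ n h ih => have := f_step n (by omega); omega

lemma chooseStep (a b d : ℕ) (h : a + 1 ≤ d) :
    (a + b + 1) * Nat.choose (a + b) a ≤ (a + 1) * Nat.choose (b + d) b := by
  rw [Nat.add_one_mul_choose_eq (a + b) a, mul_comm]
  apply Nat.mul_le_mul_left
  calc Nat.choose (a + b + 1) (a + 1) = Nat.choose (b + (a + 1)) (a + 1) := by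
        congr 1; ring
    _ = Nat.choose (b + (a + 1)) b := (Nat.choose_symm_add).symm
    _ ≤ _ := Nat.choose_le_choose b (by omega)

lemma multi (a b c d : ℕ) :
    Nat.choose (a + b + (c + d)) (a + b) * Nat.choose (a + b) a * Nat.choose (c + d) c =
    Nat.choose (a + c + (b + d)) (a + c) * Nat.choose (a + c) a * Nat.choose (b + d) b := by
  have h1 := Nat.add_choose_mul_factorial_mul_factorial (a + b) (c + d)
  have h2 := Nat.add_choose_mul_factorial_mul_factorial a b
  have h3 := Nat.add_choose_mul_factorial_mul_factorial c d
  have h4 := Nat.add_choose_mul_factorial_mul_factorial (a + c) (b + d)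
  have h5 := Nat.add_choose_mul_factorial_mul_factorial a c
  have h6 := Nat.add_choose_mul_factorial_mul_factorial b d
  have hpos : 0 < Nat.factorial a * Nat.factorial b * Nat.factorial c * Nat.factorial d := by
    positivity
  simp only [← Nat.choose_symm_add] at h1 h2 h3 h4 h5 h6
  apply Nat.eq_of_mul_eq_mul_right hpos
  rw [show a + c + (b + d) = a + b + (c + d) by ring] at *
  rw [← h4, ← h2, ← h3, ← h5, ← h6] at h1
  linarith

/-- The exchange inequality, with the multinomial coefficient divided out. -/
lemma exchange (X Y C1 C2 C3 C4 A B C D : ℝ) (hX : 0 ≤ X) (h1 : 0 < C1) (h2 : 0 < C2)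
    (h3 : 0 < C3) (h4 : 0 < C4) (hM : X * C1 * C2 = Y * C3 * C4) (hA : 0 ≤ A) (hB : 0 ≤ B)
    (hkey : (A + C) / C4 + (B + D) / C3 ≤ (C + D) / C1) :
    Y * (C3 * (A + C) + C4 * (B + D)) ≤ X * (C1 * (A + B) + C2 * (C + D)) := by
  have e1 : Y * (C3 * (A + C) + C4 * (B + D)) =
      (X * C1 * C2) * ((A + C) / C4 + (B + D) / C3) := by
    rw [hM]; field_simp
  have e2 : X * (C2 * (C + D)) = (X * C1 * C2) * ((C + D) / C1) := by
    field_simp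
  have e3 : 0 ≤ X * (C1 * (A + B)) := by positivity
  have e4 : 0 ≤ X * C1 * C2 := by positivity
  rw [e1]
  have := mul_le_mul_of_nonneg_left hkey e4
  nlinarith

lemma key (a b c d : ℕ) (ha : 1 ≤ a) (hab : a ≤ b) (hba : b ≤ a + 1) (hdc : d ≤ c)
    (hcd : c ≤ d + 1) (h : a + b + 2 ≤ c + d) :
    ((f a : ℝ) + f c) / (Nat.choose (b + d) b : ℝ) + ((f b : ℝ) + f d) / (Nat.choose (a + c) a : ℝ)
      ≤ ((f c : ℝ) + f d) / (Nat.choose (a + b) a : ℝ) := by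
  have p1 : (0 : ℝ) < Nat.choose (a + b) a := by exact_mod_cast Nat.choose_pos (by omega)
  have p3 : (0 : ℝ) < Nat.choose (a + c) a := by exact_mod_cast Nat.choose_pos (by omega)
  have p4 : (0 : ℝ) < Nat.choose (b + d) b := by exact_mod_cast Nat.choose_pos (by omega)
  by_cases hbd : b + 1 ≤ d
  · have t1 : ((f a : ℝ) + f c) / (Nat.choose (b + d) b : ℝ) ≤ f c / (Nat.choose (a + b) a : ℝ) := by
      rw [div_le_div_iff₀ p4 p1]
      have s1 := chooseStep a b d (by omega)
      have s2 := f_lt a c ha (by omega)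
      have s3 : (a + 1) * (f a + f c) ≤ f c * (a + b + 1) := by nlinarith
      have : (f a + f c) * Nat.choose (a + b) a ≤ f c * Nat.choose (b + d) b := by
        have q : (a + 1) * ((f a + f c) * Nat.choose (a + b) a) ≤
            (a + 1) * (f c * Nat.choose (b + d) b) := by
          calc _ = ((a + 1) * (f a + f c)) * Nat.choose (a + b) a := by ring
            _ ≤ (f c * (a + b + 1)) * Nat.choose (a + b) a := Nat.mul_le_mul_right _ s3
            _ = f c * ((a + b + 1) * Nat.choose (a + b) a) := by ring
            _ ≤ f c * ((a + 1) * Nat.choose (b + d) b) := Nat.mul_le_mul_left _ s1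
            _ = _ := by ring
        exact Nat.le_of_mul_le_mul_left q (by omega)
      exact_mod_cast this
    have t2 : ((f b : ℝ) + f d) / (Nat.choose (a + c) a : ℝ) ≤ f d / (Nat.choose (a + b) a : ℝ) := by
      rw [div_le_div_iff₀ p3 p1]
      have s1 := chooseStep b a c (by omega)
      rw [add_comm b a, ← Nat.choose_symm_add] at s1
      have s2 := f_lt b d (by omega) (by omega)
      have s3 : (b + 1) * (f b + f d) ≤ f d * (a + b + 1) := by nlinarith
      have : (f b + f d) * Nat.choose (a + b) a ≤ f d * Nat.choose (a + c) a := by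
        have q : (b + 1) * ((f b + f d) * Nat.choose (a + b) a) ≤
            (b + 1) * (f d * Nat.choose (a + c) a) := by
          calc _ = ((b + 1) * (f b + f d)) * Nat.choose (a + b) a := by ring
            _ ≤ (f d * (a + b + 1)) * Nat.choose (a + b) a := Nat.mul_le_mul_right _ s3
            _ = f d * ((a + b + 1) * Nat.choose (a + b) a) := by ring
            _ ≤ f d * ((b + 1) * Nat.choose (a + c) a) := Nat.mul_le_mul_left _ s1
            _ = _ := by ring
        exact Nat.le_of_mul_le_mul_left q (by omega)
      exact_mod_cast this
    rw [add_div (f c : ℝ)]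
    linarith
  · obtain rfl : b = a + 1 := by omega
    obtain rfl : d = a + 1 := by omega
    obtain rfl : c = a + 2 := by omega
    have c4 := Nat.add_one_mul_choose_eq (a + (a + 1)) a
    have c3 := Nat.choose_succ_right_eq (a + (a + 2)) a
    rw [show a + (a + 2) - a = a + 2 by omega] at c3
    rw [show a + (a + 1) + 1 = a + (a + 2) by ring] at c4
    rw [show a + 1 + (a + 1) = a + (a + 2) by ring] at p4 ⊢
    have g1 := f_lt a (a + 1) ha (by omega)
    have g2 := f_lt (a + 1) (a + 2) (by omega) (by omega)
    set x := f a
    set y := f (a + 1)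
    set z := f (a + 2)
    set K1 := Nat.choose (a + (a + 1)) a
    set K3 := Nat.choose (a + (a + 2)) a
    set K4 := Nat.choose (a + (a + 2)) (a + 1)
    have k4 : (K4 : ℝ) = 2 * K1 := by
      have : (a + 1) * K4 = (a + 1) * (2 * K1) := by linarith
      exact_mod_cast Nat.eq_of_mul_eq_mul_left (by omega) this
    have apos : (1 : ℝ) ≤ a := by exact_mod_cast ha
    have k3 : (K3 : ℝ) = 2 * K1 * (a + 1) / (a + 2) := by
      rw [eq_div_iff (by positivity), ← k4]
      exact_mod_cast c3.symm
    rw [k3, k4]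
    have g1' : (3 : ℝ) * x ≤ y := by exact_mod_cast g1
    have g2' : (3 : ℝ) * y ≤ z := by exact_mod_cast g2
    have hx : (0 : ℝ) ≤ x := by positivity
    have hy : (0 : ℝ) ≤ y := by positivity
    have e : ((x : ℝ) + z) / (2 * K1) + ((y : ℝ) + y) / (2 * K1 * (a + 1) / (a + 2)) =
        ((x + z) / 2 + y * (a + 2) / (a + 1)) / K1 := by
      field_simp
      ring
    rw [e]
    apply div_le_div_of_nonneg_right _ p1.le
    have : (y : ℝ) * (a + 2) / (a + 1) ≤ y * (3 / 2) := by
      rw [div_le_iff₀ (by positivity)]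
      nlinarith
    linarith

lemma f_le : ∀ n i j : ℕ, i + j = n → 1 ≤ i → 1 ≤ j →
    f n ≤ Nat.choose n i * (f i + f j) := by
  intro n
  induction n using Nat.strong_induction_on with
  | _ n ih =>
  have main : ∀ i j : ℕ, i + j = n → 1 ≤ i → i ≤ j → f n ≤ Nat.choose n i * (f i + f j) := by
    intro i j hij hi hle
    by_cases hb : j ≤ i + 1
    · rw [← hij, f_bal i j hi (by omega) (by omega) hb]
    · by_cases h1 : i = 1
      · subst h1
        obtain ⟨c, d, hcd, hdc, hcd', hd⟩ : ∃ c d, c + d = j ∧ d ≤ c ∧ c ≤ d + 1 ∧ 1 ≤ d :=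
          ⟨(j + 1) / 2, j / 2, by omega, by omega, by omega, by omega⟩
        have e1 := f_bal c d (by omega) hd hcd' (by omega)
        have e2 := f_bal (1 + d) c (by omega) (by omega) (by omega) (by omega)
        have e3 := ih (1 + d) (by omega) 1 d rfl le_rfl hd
        have hm := multi 1 0 d c
        have hn : 1 + d + c = n := by omega
        have hn' : 1 + 0 + (d + c) = n := by omega
        simp only [zero_add, add_zero] at hm
        rw [hn] at e2
        rw [hn, show 1 + (d + c) = n by omega] at hm
        simp only [Nat.choose_one_right, Nat.choose_self, Nat.choose_zero_right, mul_one] at hm e3 ⊢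
        rw [show d + c = c + d by ring, show (c + d).choose d = (c + d).choose c from
          (Nat.choose_symm_add).symm] at hm
        rw [e2, ← hcd, e1]
        rw [f_one] at *
        have hc4 : 3 ≤ f c := by
          have := f_lt 1 c le_rfl (by omega)
          rw [f_one] at this; omega
        set Y := n.choose (1 + d)
        calc Y * (f (1 + d) + f c) ≤ Y * ((1 + d) * (1 + f d) + f c) := by gcongr
          _ ≤ Y * ((1 + d) * (f c + f d)) := by
            apply Nat.mul_le_mul_left
            nlinarith
          _ = (Y * (1 + d)) * (f c + f d) := by ring
          _ = n * (c + d).choose c * (f c + f d) := by rw [← hm]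
          _ ≤ _ := by nlinarith [Nat.zero_le n]
      · obtain ⟨c, d, hcd, hdc, hcd', hj2⟩ : ∃ c d, c + d = j ∧ d ≤ c ∧ c ≤ d + 1 ∧ d = j / 2 :=
          ⟨(j + 1) / 2, j / 2, by omega, by omega, by omega, rfl⟩
        obtain ⟨a, b, hab, hle1, hle2, hi2⟩ : ∃ a b, a + b = i ∧ a ≤ b ∧ b ≤ a + 1 ∧ a = i / 2 :=
          ⟨i / 2, (i + 1) / 2, by omega, by omega, by omega, rfl⟩
        have ha : 1 ≤ a := by omega
        have e1 := f_bal c d (by omega) (by omega) hcd' (by omega)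
        have e2 := f_bal a b (by omega) (by omega) (by omega) (by omega)
        have e3 := f_bal (a + c) (b + d) (by omega) (by omega) (by omega) (by omega)
        have i1 := ih (a + c) (by omega) a c rfl (by omega) (by omega)
        have i2 := ih (b + d) (by omega) b d rfl (by omega) (by omega)
        have k := key a b c d ha hle1 hle2 hdc hcd' (by omega)
        have hm := multi a b c d
        rw [show a + c + (b + d) = n by omega] at e3 hm
        rw [show a + b + (c + d) = n by omega] at hm
        have p1 : (0 : ℝ) < Nat.choose (a + b) a := by exact_mod_cast Nat.choose_pos (by omega)
        have p2 : (0 : ℝ) < Nat.choose (c + d) c := by exact_mod_cast Nat.choose_pos (by omega)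
        have p3 : (0 : ℝ) < Nat.choose (a + c) a := by exact_mod_cast Nat.choose_pos (by omega)
        have p4 : (0 : ℝ) < Nat.choose (b + d) b := by exact_mod_cast Nat.choose_pos (by omega)
        have ex := exchange (n.choose (a + b)) (n.choose (a + c)) _ _ _ _ (f a) (f b) (f c) (f d)
          (by positivity) p1 p2 p3 p4 (by exact_mod_cast hm) (by positivity) (by positivity) k
        have ex' : n.choose (a + c) * ((a + c).choose a * (f a + f c) +
            (b + d).choose b * (f b + f d)) ≤ n.choose (a + b) * ((a + b).choose a * (f a + f b) +
            (c + d).choose c * (f c + f d)) := by exact_mod_cast ex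
        rw [e3, ← hab, ← hcd, e1, e2]
        exact le_trans (Nat.mul_le_mul_left _ (Nat.add_le_add i1 i2)) ex'
  intro i j hij hi hj
  rcases le_total i j with h | h
  · exact main i j hij hi h
  · have := main j i (by omega) hj h
    rw [← hij] at this ⊢
    rw [Nat.choose_symm_add, add_comm (f i)]
    exact this

lemma perms_finite {α : Type*} (s : Multiset α) : {w : List α | (w : Multiset α) = s}.Finite := by
  classical
  induction s using Quotient.inductionOn with
  | _ l =>
    apply (l.permutations.toFinset.finite_toSet).subset
    intro w hw
    have hw' : w.Perm l := Quotient.exact hw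
    simpa using hw'

lemma perms_card_le {α : Type*} (s : Multiset α) :
    {w : List α | (w : Multiset α) = s}.ncard ≤ (Multiset.card s).factorial := by
  classical
  induction s using Quotient.inductionOn with
  | _ l =>
    have h : {w : List α | (w : Multiset α) = (l : Multiset α)} = ↑(l.permutations.toFinset) := by
      ext w; simp
    change {w : List α | (w : Multiset α) = (l : Multiset α)}.ncard ≤ _
    rw [h, Set.ncard_coe_finset]
    calc _ ≤ l.permutations.length := List.toFinset_card_le _
      _ = _ := by rw [List.length_permutations]; rfl

lemma perms_card {α : Type*} (l : List α) (hl : l.Nodup) :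
    {w : List α | w.Perm l}.ncard = l.length.factorial := by
  classical
  have h : {w : List α | w.Perm l} = ↑(l.permutations.toFinset) := by
    ext w; simp
  rw [h, Set.ncard_coe_finset, List.toFinset_card_of_nodup (List.nodup_permutations _ hl),
    List.length_permutations]

/-- Lower bound on the alphabetic length. -/
lemma lower_s18 {α : Type*} (r : RegularExpression α) : ∀ s : Multiset α, 1 ≤ Multiset.card s →
    (∀ w ∈ r.matches', (w : Multiset α) = s) →
    f (Multiset.card s) * Set.ncard {w | w ∈ r.matches'} ≤
      alen r * (Multiset.card s).factorial := by
  induction r with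
  | zero =>
    intro s _ _
    have : {w : List α | w ∈ (RegularExpression.zero : RegularExpression α).matches'} = ∅ := by
      ext w
      simp only [Set.mem_ofPred_eq, Set.mem_empty_iff_false, iff_false]
      exact Language.notMem_zero w
    rw [this]; simp
  | epsilon =>
    intro s hs h
    have := h [] (Language.nil_mem_one)
    rw [← this] at hs
    simp at hs
  | char a =>
    intro s hs h
    have e : [a] ∈ (RegularExpression.char a).matches' := by
      rw [RegularExpression.matches'_char]; exact Set.mem_singleton _
    have := h [a] e
    subst this
    have h2 : {w : List α | w ∈ (RegularExpression.char a).matches'} = {[a]} := by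
      rw [RegularExpression.matches'_char]; rfl
    rw [h2]
    simp [f_one, alen]
  | plus r₁ r₂ ih₁ ih₂ =>
    intro s hs h
    have k1 := ih₁ s hs (fun w hw => h w (Or.inl hw))
    have k2 := ih₂ s hs (fun w hw => h w (Or.inr hw))
    have e : {w | w ∈ (RegularExpression.plus r₁ r₂).matches'} =
        {w | w ∈ r₁.matches'} ∪ {w | w ∈ r₂.matches'} := rfl
    rw [e]
    have := Set.ncard_union_le {w | w ∈ r₁.matches'} {w | w ∈ r₂.matches'}
    calc _ ≤ f (Multiset.card s) * (_ + _) := Nat.mul_le_mul_left _ this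
      _ ≤ _ := by simp only [alen]; linarith
  | comp r₁ r₂ ih₁ ih₂ =>
    intro s hs h
    have e : {w | w ∈ (RegularExpression.comp r₁ r₂).matches'} =
        (fun p : List α × List α => p.1 ++ p.2) ''
          ({w | w ∈ r₁.matches'} ×ˢ {w | w ∈ r₂.matches'}) := by
      ext w
      change w ∈ r₁.matches' * r₂.matches' ↔ _
      rw [Language.mem_mul]
      constructor
      · rintro ⟨a, ha, b, hb, rfl⟩
        exact ⟨(a, b), ⟨ha, hb⟩, rfl⟩
      · rintro ⟨⟨a, b⟩, ⟨ha, hb⟩, rfl⟩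
        exact ⟨a, ha, b, hb, rfl⟩
    have hmul : ∀ u ∈ r₁.matches', ∀ v ∈ r₂.matches', (u : Multiset α) + (v : Multiset α) = s := by
      intro u hu v hv
      have := h (u ++ v) (by
        change _ ∈ r₁.matches' * r₂.matches'
        exact Language.mem_mul.2 ⟨u, hu, v, hv, rfl⟩)
      rw [← this]; simp
    by_cases hne : (∃ u, u ∈ r₁.matches') ∧ (∃ v, v ∈ r₂.matches')
    · obtain ⟨⟨u, hu⟩, ⟨v, hv⟩⟩ := hne
      have q1 : ∀ w ∈ r₁.matches', (w : Multiset α) = (u : Multiset α) := by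
        intro w hw
        exact add_right_cancel ((hmul w hw v hv).trans (hmul u hu v hv).symm)
      have q2 : ∀ w ∈ r₂.matches', (w : Multiset α) = (v : Multiset α) := by
        intro w hw
        exact add_left_cancel ((hmul u hu w hw).trans (hmul u hu v hv).symm)
      have huv := hmul u hu v hv
      have fin1 : {w | w ∈ r₁.matches'}.Finite := (perms_finite (u : Multiset α)).subset q1
      have fin2 : {w | w ∈ r₂.matches'}.Finite := (perms_finite (v : Multiset α)).subset q2
      have b1 : {w | w ∈ r₁.matches'}.ncard ≤ u.length.factorial :=
        (Set.ncard_le_ncard q1 (perms_finite _)).trans (perms_card_le (u : Multiset α))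
      have b2 : {w | w ∈ r₂.matches'}.ncard ≤ v.length.factorial :=
        (Set.ncard_le_ncard q2 (perms_finite _)).trans (perms_card_le (v : Multiset α))
      have hcard : {w | w ∈ (RegularExpression.comp r₁ r₂).matches'}.ncard ≤
          {w | w ∈ r₁.matches'}.ncard * {w | w ∈ r₂.matches'}.ncard := by
        rw [e, ← Set.ncard_prod]
        exact Set.ncard_image_le (fin1.prod fin2)
      have i1 := ih₁ (u : Multiset α)
      have i2 := ih₂ (v : Multiset α)
      have hlen : u.length + v.length = Multiset.card s := by rw [← huv]; simp
      simp only [Multiset.coe_card] at i1 i2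
      set x := {w | w ∈ r₁.matches'}.ncard
      set y := {w | w ∈ r₂.matches'}.ncard
      set z := {w | w ∈ (RegularExpression.comp r₁ r₂).matches'}.ncard
      simp only [alen]
      rcases Nat.eq_zero_or_pos u.length with hu0 | hu0
      · have i2 := i2 (by omega) q2
        rw [hu0] at b1 hlen
        rw [zero_add] at hlen
        rw [hlen] at i2
        have : z ≤ y := hcard.trans (by simpa using Nat.mul_le_mul_right y b1)
        calc _ ≤ f (Multiset.card s) * y := Nat.mul_le_mul_left _ this
          _ ≤ _ := i2
          _ ≤ _ := Nat.mul_le_mul_right _ (by omega)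
      rcases Nat.eq_zero_or_pos v.length with hv0 | hv0
      · have i1 := i1 (by omega) q1
        rw [hv0] at b2 hlen
        rw [add_zero] at hlen
        rw [hlen] at i1
        have : z ≤ x := hcard.trans (by simpa using Nat.mul_le_mul_left x b2)
        calc _ ≤ f (Multiset.card s) * x := Nat.mul_le_mul_left _ this
          _ ≤ _ := i1
          _ ≤ _ := Nat.mul_le_mul_right _ (by omega)
      have i1 := i1 hu0 q1
      have i2 := i2 hv0 q2
      have hf := f_le (Multiset.card s) u.length v.length hlen hu0 hv0
      have hch := Nat.add_choose_mul_factorial_mul_factorial u.length v.length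
      rw [← Nat.choose_symm_add, hlen] at hch
      rw [← hch]
      set N := (Multiset.card s).choose u.length
      set P := u.length.factorial
      set Q := v.length.factorial
      calc f (Multiset.card s) * z ≤ (N * (f u.length + f v.length)) * (x * y) :=
            Nat.mul_le_mul hf hcard
        _ = N * ((f u.length * x) * y + (f v.length * y) * x) := by ring
        _ ≤ N * ((alen r₁ * P) * Q + (alen r₂ * Q) * P) := by gcongr
        _ = _ := by ring
    · have : {w | w ∈ (RegularExpression.comp r₁ r₂).matches'} = ∅ := by
        rw [e, Set.image_eq_empty, Set.prod_eq_empty_iff]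
        by_contra hcon
        push Not at hcon
        exact hne ⟨hcon.1, hcon.2⟩
      rw [this]; simp
  | star r ih =>
    intro s hs h
    have := h [] (Language.nil_mem_kstar _)
    rw [← this] at hs
    simp at hs

/-- Union of a list of expressions. -/
def unionList {α : Type*} : List (RegularExpression α) → RegularExpression α
  | [] => RegularExpression.zero
  | r :: l => RegularExpression.plus r (unionList l)

lemma mem_unionList {α : Type*} (l : List (RegularExpression α)) (w : List α) :
    w ∈ (unionList l).matches' ↔ ∃ r ∈ l, w ∈ r.matches' := by
  induction l with
  | nil =>
    simp only [List.not_mem_nil, false_and, exists_false, iff_false]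
    exact Language.notMem_zero w
  | cons r l ih =>
    have : w ∈ (unionList (r :: l)).matches' ↔ w ∈ r.matches' ∨ w ∈ (unionList l).matches' :=
      Iff.rfl
    rw [this, ih]
    simp

lemma alen_unionList {α : Type*} (l : List (RegularExpression α)) (b : ℕ)
    (h : ∀ r ∈ l, alen r ≤ b) : alen (unionList l) ≤ l.length * b := by
  induction l with
  | nil => simp [unionList, alen]
  | cons r l ih =>
    have h1 := h r (by simp)
    have h2 := ih (fun r hr => h r (by simp [hr]))
    simp only [unionList, alen, List.length_cons]
    linarith

/-- Upper bound: the recursive construction. -/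
lemma upper_s18 {α : Type*} [DecidableEq α] : ∀ (m : ℕ) (S : Finset α), 1 ≤ m → S.card = m →
    ∃ r : RegularExpression α, alen r ≤ f m ∧ ∀ w, w ∈ r.matches' ↔ (w : Multiset α) = S.val := by
  intro m
  induction m using Nat.strong_induction_on with
  | _ m ih =>
  intro S hm hS
  by_cases h1 : m = 1
  · subst h1
    obtain ⟨a, rfl⟩ := Finset.card_eq_one.1 hS
    refine ⟨RegularExpression.char a, by simp [alen, f_one], fun w => ?_⟩
    rw [RegularExpression.matches'_char, Finset.singleton_val, Multiset.coe_eq_singleton]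
    exact Set.mem_singleton_iff
  · have ih' : ∀ A : Finset α, ∃ r : RegularExpression α, 1 ≤ A.card → A.card < m →
        alen r ≤ f A.card ∧ ∀ w, w ∈ r.matches' ↔ (w : Multiset α) = A.val := by
      intro A
      by_cases hA : 1 ≤ A.card ∧ A.card < m
      · obtain ⟨r, hr⟩ := ih A.card hA.2 A hA.1 rfl
        exact ⟨r, fun _ _ => hr⟩
      · exact ⟨0, fun a b => absurd ⟨a, b⟩ hA⟩
    choose R hR using ih'
    have hsub : ∀ A ∈ S.powersetCard (m / 2), A ⊆ S ∧ A.card = m / 2 ∧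
        (S \ A).card = (m + 1) / 2 := by
      intro A hA
      rw [Finset.mem_powersetCard] at hA
      refine ⟨hA.1, hA.2, ?_⟩
      rw [Finset.card_sdiff_of_subset hA.1]
      omega
    refine ⟨unionList ((S.powersetCard (m / 2)).toList.map
      (fun A => RegularExpression.comp (R A) (R (S \ A)))), ?_, ?_⟩
    · refine (alen_unionList _ (f (m / 2) + f ((m + 1) / 2)) ?_).trans ?_
      · intro r hr
        simp only [List.mem_map, Finset.mem_toList] at hr
        obtain ⟨A, hA, rfl⟩ := hr
        obtain ⟨_, h2, h3⟩ := hsub A hA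
        have k1 := (hR A (by omega) (by omega)).1
        have k2 := (hR (S \ A) (by omega) (by omega)).1
        rw [h2] at k1
        rw [h3] at k2
        simp only [alen]
        omega
      · rw [f_bal_aux m (by omega)]
        simp [hS]
    · intro w
      rw [mem_unionList]
      constructor
      · rintro ⟨r, hr, hw⟩
        simp only [List.mem_map, Finset.mem_toList] at hr
        obtain ⟨A, hA, rfl⟩ := hr
        obtain ⟨h1, h2, h3⟩ := hsub A hA
        have k1 := (hR A (by omega) (by omega)).2
        have k2 := (hR (S \ A) (by omega) (by omega)).2
        obtain ⟨u, hu, v, hv, rfl⟩ := Language.mem_mul.1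
          (show w ∈ (R A).matches' * (R (S \ A)).matches' from hw)
        rw [← Multiset.coe_add, (k1 u).1 hu, (k2 v).1 hv, Finset.sdiff_val]
        exact add_tsub_cancel_of_le (Finset.val_le_iff.2 h1)
      · intro hw
        have hnd : w.Nodup := by
          rw [← Multiset.coe_nodup, hw]; exact S.nodup
        have hlen : w.length = m := by
          rw [← hS, Finset.card_def, ← hw, Multiset.coe_card]
        have hsplit : (w.take (m / 2) : Multiset α) + (w.drop (m / 2) : Multiset α) = S.val := by
          rw [Multiset.coe_add, List.take_append_drop, hw]
        set A : Finset α := ⟨(w.take (m / 2) : Multiset α), by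
          rw [Multiset.coe_nodup]; exact hnd.sublist (List.take_sublist _ _)⟩ with hAdef
        have hAv : A.val = (w.take (m / 2) : Multiset α) := rfl
        have hAS : A ∈ S.powersetCard (m / 2) := by
          rw [Finset.mem_powersetCard]
          constructor
          · rw [← Finset.val_le_iff, hAv, ← hsplit]
            exact Multiset.le_add_right _ _
          · rw [Finset.card_def, hAv, Multiset.coe_card, List.length_take]
            omega
        have hSA : (S \ A).val = (w.drop (m / 2) : Multiset α) := by
          rw [Finset.sdiff_val, hAv, ← hsplit, add_tsub_cancel_left]
        obtain ⟨h1, h2, h3⟩ := hsub A hAS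
        have k1 := (hR A (by omega) (by omega)).2
        have k2 := (hR (S \ A) (by omega) (by omega)).2
        refine ⟨RegularExpression.comp (R A) (R (S \ A)), ?_, ?_⟩
        · simp only [List.mem_map, Finset.mem_toList]
          exact ⟨A, hAS, rfl⟩
        · change w ∈ (R A).matches' * (R (S \ A)).matches'
          exact Language.mem_mul.2 ⟨w.take (m / 2), (k1 _).2 hAv.symm, w.drop (m / 2),
            (k2 _).2 hSA.symm, List.take_append_drop _ _⟩

lemma exists_full (n : ℕ) (hn : 1 ≤ n) : ∃ r : RegularExpression (Fin n),
    (∀ w, w ∈ r.matches' → w ∈ permLang n) ∧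
      Nat.factorial n ≤ Set.ncard {w | w ∈ r.matches'} ∧ alen r ≤ f n := by
  obtain ⟨r, hr, hw⟩ := upper_s18 n (Finset.univ : Finset (Fin n)) hn (by simp)
  have hw' : ∀ w, w ∈ r.matches' ↔ w.Perm (List.finRange n) := by
    intro w
    rw [hw w, ← Multiset.coe_eq_coe]
    rfl
  refine ⟨r, fun w h => (hw' w).1 h, ?_, hr⟩
  have : {w | w ∈ r.matches'} = {w | w.Perm (List.finRange n)} := by
    ext w; exact hw' w
  rw [this, perms_card _ (List.nodup_finRange n), List.length_finRange]

lemma ell_le (n : ℕ) (hn : 1 ≤ n) : ell n (Nat.factorial n) ≤ f n := by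
  obtain ⟨r, h1, h2, h3⟩ := exists_full n hn
  have h4 : ell n (Nat.factorial n) ≤ alen r := by
    unfold ell
    exact Nat.sInf_le ⟨r, h1, h2, rfl⟩
  exact h4.trans h3

lemma le_ell (n k : ℕ) (hn : 1 ≤ n) (hkn : k ≤ Nat.factorial n) :
    f n * k ≤ ell n k * Nat.factorial n := by
  have hne : {m | ∃ r : RegularExpression (Fin n), (∀ w, w ∈ r.matches' → w ∈ permLang n) ∧
      k ≤ Set.ncard {w | w ∈ r.matches'} ∧ alen r = m}.Nonempty := by
    obtain ⟨r, h1, h2, _⟩ := exists_full n hn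
    exact ⟨_, r, h1, hkn.trans h2, rfl⟩
  obtain ⟨r, h1, h2, h3⟩ := Nat.sInf_mem hne
  have h3' : alen r = ell n k := h3
  have := lower_s18 r (List.finRange n : Multiset (Fin n)) (by simpa using hn)
    (fun w hw => Multiset.coe_eq_coe.2 (h1 w hw))
  rw [Multiset.coe_card, List.length_finRange, h3'] at this
  exact (Nat.mul_le_mul_left _ h2).trans this

theorem stmt_18 (n k : ℕ) (hn : 1 ≤ n) (hk : 1 ≤ k) (hkn : k ≤ Nat.factorial n) :
    (ell n (Nat.factorial n) : ℝ) / (Nat.factorial n : ℝ) ≤ (ell n k : ℝ) / (k : ℝ) ∧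
    (f n : ℝ) / (Nat.factorial n : ℝ) ≤ (ell n (Nat.factorial n) : ℝ) / (Nat.factorial n : ℝ) := by
  have hfac : (0 : ℝ) < (Nat.factorial n : ℝ) := by exact_mod_cast Nat.factorial_pos n
  have hk0 : (0 : ℝ) < (k : ℝ) := by exact_mod_cast hk
  constructor
  · rw [div_le_div_iff₀ hfac hk0]
    have := (Nat.mul_le_mul_right k (ell_le n hn)).trans (le_ell n k hn hkn)
    exact_mod_cast this
  · apply div_le_div_of_nonneg_right _ hfac.le
    have := Nat.le_of_mul_le_mul_right (le_ell n _ hn le_rfl) (Nat.factorial_pos n)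
    exact_mod_cast this
end
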